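/- Let r₀ > 0 and let w be a classical solution of (eqw) on [−1,1]×I. Then for every s in the interior of I, the function σ ↦ E(w(σ)) is differentiable at s and d/ds E(w(s)) = −(4/(p−1))·∫_{−1}^{1} (∂ₛw(y,s))²·ρ(y)/(1−y²) dy + (N−1)·e^{−s}·∫_{−1}^{1} ∂ₛw(y,s)·∂ᵧw(y,s)·ρ(y)/(r₀+ye^{−s}) dy. -/

import Mathlib

/-!
The energy identity comes from differentiating under the integral sign and one integration by parts.
The time derivative of the energy density is
`(∂ₛw ∂ₛ²w + (1 - y²) ∂ᵧw ∂ᵧ∂ₛw + 2(p+1)/(p-1)² w ∂ₛw - |w|^(p-1) w ∂ₛw) ρ`,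
which is bounded near the given time since `w` is `C²` up to `y = ±1` (`exists_partials`,
`hasDerivAt_integral_of_continuousOn`). Substituting the equation for `∂ₛ²w` and using
`ρ' = -(4/(p-1)) y ρ / (1 - y²)` (`hasDerivAt_rho`), this density equals
`∂ᵧG - (4/(p-1)) (∂ₛw)² ρ/(1 - y²) + (N-1) e^{-s} ∂ₛw ∂ᵧw ρ/(r₀ + y e^{-s})` with
`G = ρ (1 - y²) ∂ᵧw ∂ₛw - y ρ (∂ₛw)²`. As `G` is continuous on `[-1, 1]` and vanishes at both ends,
its derivative integrates to zero. The singular weight `ρ/(1 - y²) = (1 - y²)^(2/(p-1) - 1)` is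
integrable because its exponent exceeds `-1` (`intervalIntegrable_one_sub_sq_rpow`).
-/

/- STATEMENT 2: Energy identity. For a classical solution w of (eqw) on [-1,1] × I,
for every s in the interior of I, σ ↦ E(w(σ)) is differentiable at s with
d/ds E(w(s)) = -(4/(p-1)) ∫ (∂ₛw)² ρ/(1-y²) + (N-1) e^{-s} ∫ ∂ₛw ∂ᵧw ρ/(r₀+ye^{-s}). -/

open Set MeasureTheory

noncomputable section

/-- The weight ρ(y) = (1-y²)^{2/(p-1)}. -/
def rho (p y : ℝ) : ℝ := (1 - y ^ 2) ^ (2 / (p - 1))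

/-- Partial derivative in the second (time) variable. -/
def dS (w : ℝ → ℝ → ℝ) (y s : ℝ) : ℝ := deriv (fun σ => w y σ) s

/-- Partial derivative in the first (space) variable. -/
def dY (w : ℝ → ℝ → ℝ) (y s : ℝ) : ℝ := deriv (fun z => w z s) y

/-- `w` is a classical solution of equation (eqw) on `[-1,1] × I` with parameter `r₀`. -/
def IsSolW (p : ℝ) (N : ℕ) (r₀ : ℝ) (I : Set ℝ) (w : ℝ → ℝ → ℝ) : Prop :=
  ContDiffOn ℝ 2 (fun q : ℝ × ℝ => w q.1 q.2) (Set.Icc (-1 : ℝ) 1 ×ˢ I) ∧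
  (∀ y ∈ Set.Icc (-1 : ℝ) 1, ∀ s ∈ I, 0 < r₀ + y * Real.exp (-s)) ∧
  (∀ y ∈ Set.Ioo (-1 : ℝ) 1, ∀ s ∈ I,
    deriv (fun σ => dS w y σ) s =
      (1 / rho p y) * deriv (fun z => rho p z * (1 - z ^ 2) * dY w z s) y
        - 2 * (p + 1) / (p - 1) ^ 2 * w y s
        + |w y s| ^ (p - 1) * w y s
        - (p + 3) / (p - 1) * dS w y s
        - 2 * y * deriv (fun z => dS w z s) y
        + Real.exp (-s) * (((N : ℝ) - 1) / (r₀ + y * Real.exp (-s))) * dY w y s)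

/-- The energy E(w(s)). -/
def Ew (p : ℝ) (w : ℝ → ℝ → ℝ) (s : ℝ) : ℝ :=
  ∫ y in (-1 : ℝ)..1,
    ((1 / 2) * dS w y s ^ 2 + (1 / 2) * dY w y s ^ 2 * (1 - y ^ 2)
      + (p + 1) / (p - 1) ^ 2 * w y s ^ 2
      - (1 / (p + 1)) * |w y s| ^ (p + 1)) * rho p y

/-- Up to second order, the partial derivatives of a function that is `C²` on a closed rectangle
extend continuously to the whole rectangle: `a = ∂ᵧw`, `b = ∂ₛw`, `ay = ∂ᵧ²w`, `c = ∂ᵧ∂ₛw = ∂ₛ∂ᵧw`,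
`bs = ∂ₛ²w`. The extensions matter because the two-sided `deriv` in `y` is a junk value at `y = ±1`
in general. -/
lemma exists_partials {w : ℝ → ℝ → ℝ} {s₁ s₂ : ℝ} (hs : s₁ < s₂)
    (h : ContDiffOn ℝ 2 (fun q : ℝ × ℝ => w q.1 q.2) (Icc (-1 : ℝ) 1 ×ˢ Icc s₁ s₂)) :
    ∃ a b ay c bs : ℝ × ℝ → ℝ,
      ContinuousOn a (Icc (-1 : ℝ) 1 ×ˢ Icc s₁ s₂) ∧ ContinuousOn b (Icc (-1 : ℝ) 1 ×ˢ Icc s₁ s₂) ∧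
      ContinuousOn ay (Icc (-1 : ℝ) 1 ×ˢ Icc s₁ s₂) ∧ ContinuousOn c (Icc (-1 : ℝ) 1 ×ˢ Icc s₁ s₂) ∧
      ContinuousOn bs (Icc (-1 : ℝ) 1 ×ˢ Icc s₁ s₂) ∧
      ∀ y ∈ Ioo (-1 : ℝ) 1, ∀ σ ∈ Ioo s₁ s₂,
        HasDerivAt (fun z => w z σ) (a (y, σ)) y ∧ HasDerivAt (fun τ => w y τ) (b (y, σ)) σ ∧
        HasDerivAt (fun z => a (z, σ)) (ay (y, σ)) y ∧ HasDerivAt (fun τ => a (y, τ)) (c (y, σ)) σ ∧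
        HasDerivAt (fun z => b (z, σ)) (c (y, σ)) y ∧ HasDerivAt (fun τ => b (y, τ)) (bs (y, σ)) σ := by
  set K := Icc (-1 : ℝ) 1 ×ˢ Icc s₁ s₂ with hK
  set W : ℝ × ℝ → ℝ := fun q => w q.1 q.2 with hW
  have hU : UniqueDiffOn ℝ K :=
    (uniqueDiffOn_Icc (by norm_num)).prod (uniqueDiffOn_Icc hs)
  have h1 : ContDiffOn ℝ 1 (fderivWithin ℝ W K) K := h.fderivWithin hU (by norm_num)
  have h2 : ContinuousOn (fderivWithin ℝ (fderivWithin ℝ W K) K) K :=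
    h1.continuousOn_fderivWithin hU (by norm_num)
  set D := fderivWithin ℝ W K
  set D2 := fderivWithin ℝ D K
  refine ⟨fun q => D q (1, 0), fun q => D q (0, 1), fun q => D2 q (1, 0) (1, 0),
    fun q => D2 q (0, 1) (1, 0), fun q => D2 q (0, 1) (0, 1),
    h1.continuousOn.clm_apply continuousOn_const, h1.continuousOn.clm_apply continuousOn_const,
    (h2.clm_apply continuousOn_const).clm_apply continuousOn_const,
    (h2.clm_apply continuousOn_const).clm_apply continuousOn_const,
    (h2.clm_apply continuousOn_const).clm_apply continuousOn_const, ?_⟩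
  intro y hy σ hσ
  have hnhds : K ∈ nhds (y, σ) :=
    prod_mem_nhds (Icc_mem_nhds hy.1 hy.2) (Icc_mem_nhds hσ.1 hσ.2)
  have hmem : (y, σ) ∈ K := mem_of_mem_nhds hnhds
  have hWd : HasFDerivAt W (D (y, σ)) (y, σ) :=
    ((h.differentiableOn (by norm_num) _ hmem).hasFDerivWithinAt).hasFDerivAt hnhds
  have hDd : HasFDerivAt D (D2 (y, σ)) (y, σ) :=
    ((h1.differentiableOn (by norm_num) _ hmem).hasFDerivWithinAt).hasFDerivAt hnhds
  have hsymm : IsSymmSndFDerivWithinAt ℝ W K (y, σ) :=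
    (h _ hmem).isSymmSndFDerivWithinAt (by simp) hU
      (subset_closure (mem_interior_iff_mem_nhds.2 hnhds)) hmem
  have hl : HasDerivAt (fun z : ℝ => (z, σ)) ((1 : ℝ), (0 : ℝ)) y :=
    (hasDerivAt_id y).prodMk (hasDerivAt_const y σ)
  have hr : HasDerivAt (fun τ : ℝ => (y, τ)) ((0 : ℝ), (1 : ℝ)) σ :=
    (hasDerivAt_const σ y).prodMk (hasDerivAt_id σ)
  have hDe : ∀ v : ℝ × ℝ, HasFDerivAt (fun q => D q v) ((D2 (y, σ)).flip v) (y, σ) := by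
    intro v
    simpa using hDd.clm_apply (hasFDerivAt_const v (y, σ))
  have hsw : D2 (y, σ) (0, 1) (1, 0) = D2 (y, σ) (1, 0) (0, 1) := hsymm _ _
  refine ⟨?_, ?_, ?_, ?_, ?_, ?_⟩
  · exact HasFDerivAt.comp_hasDerivAt (f := fun z : ℝ => (z, σ)) y hWd hl
  · exact HasFDerivAt.comp_hasDerivAt (f := fun τ : ℝ => (y, τ)) σ hWd hr
  · exact (hDe (1, 0)).comp_hasDerivAt y hl
  · exact (hDe (1, 0)).comp_hasDerivAt σ hr
  · have := (hDe (0, 1)).comp_hasDerivAt y hl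
    simp only
    rw [hsw]
    exact this
  · exact (hDe (0, 1)).comp_hasDerivAt σ hr

/-- On `[0, 1]` the factor `(1 + y) ^ r` of `(1 - y²) ^ r` is continuous and `(1 - y) ^ r` is
integrable; `[-1, 0]` follows by reflection. -/
lemma intervalIntegrable_one_sub_sq_rpow {r : ℝ} (hr : -1 < r) :
    IntervalIntegrable (fun y : ℝ => (1 - y ^ 2) ^ r) volume (-1) 1 := by
  have key : IntervalIntegrable (fun y : ℝ => (1 - y ^ 2) ^ r) volume 0 1 := by
    have h1 : IntervalIntegrable (fun y : ℝ => (1 - y) ^ r) volume 0 1 := by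
      have := (intervalIntegral.intervalIntegrable_rpow' (a := 0) (b := 1) hr).comp_sub_left 1
      simpa using this.symm
    have h2 : ContinuousOn (fun y : ℝ => (1 + y) ^ r) (uIcc 0 1) := by
      intro y hy
      rw [uIcc_of_le zero_le_one] at hy
      have : (1 + y) ≠ 0 := by linarith [hy.1]
      exact ((continuousAt_const.add continuousAt_id).rpow_const (Or.inl this)).continuousWithinAt
    refine (h1.mul_continuousOn h2).congr ?_
    intro y hy
    rw [uIoc_of_le zero_le_one] at hy
    simp only
    rw [← Real.mul_rpow (by linarith [hy.2]) (by linarith [hy.1])]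
    congr 1; ring
  have key' : IntervalIntegrable (fun y : ℝ => (1 - y ^ 2) ^ r) volume (-1) 0 := by
    have := key.comp_sub_left 0
    simpa using this.symm
  exact key'.trans key

/-- Differentiation under the integral sign on a compact rectangle; the derivative is only needed
in the open rectangle, and the dominating function is a constant. -/
lemma hasDerivAt_integral_of_continuousOn {F F' : ℝ × ℝ → ℝ} {s₁ s₂ s : ℝ} (hs : s ∈ Ioo s₁ s₂)
    (hF : ContinuousOn F (Icc (-1 : ℝ) 1 ×ˢ Icc s₁ s₂))
    (hF' : ContinuousOn F' (Icc (-1 : ℝ) 1 ×ˢ Icc s₁ s₂))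
    (hd : ∀ y ∈ Ioo (-1 : ℝ) 1, ∀ σ ∈ Ioo s₁ s₂,
      HasDerivAt (fun τ => F (y, τ)) (F' (y, σ)) σ) :
    HasDerivAt (fun σ => ∫ y in (-1 : ℝ)..1, F (y, σ)) (∫ y in (-1 : ℝ)..1, F' (y, s)) s := by
  obtain ⟨C, hC⟩ := (isCompact_Icc.prod isCompact_Icc).exists_bound_of_continuousOn hF'
  have hslice : ∀ {G : ℝ × ℝ → ℝ}, ContinuousOn G (Icc (-1 : ℝ) 1 ×ˢ Icc s₁ s₂) →
      ∀ σ ∈ Ioo s₁ s₂, IntervalIntegrable (fun y => G (y, σ)) volume (-1) 1 := by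
    intro G hG σ hσ
    refine ContinuousOn.intervalIntegrable_of_Icc (by norm_num) ?_
    exact hG.comp (by fun_prop) fun y hy => ⟨hy, Ioo_subset_Icc_self hσ⟩
  have hae : ∀ᵐ y : ℝ, y ≠ 1 := by simp [ae_iff]
  have hnh : Ioo s₁ s₂ ∈ nhds s := Ioo_mem_nhds hs.1 hs.2
  refine (intervalIntegral.hasDerivAt_integral_of_dominated_loc_of_deriv_le
    (F := fun σ y => F (y, σ)) (F' := fun σ y => F' (y, σ)) (bound := fun _ => C)
    hnh ?_ (hslice hF s hs) ?_ ?_ intervalIntegrable_const ?_).2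
  · filter_upwards [hnh] with σ hσ
    exact (intervalIntegrable_iff.1 (hslice hF σ hσ)).aestronglyMeasurable
  · exact (intervalIntegrable_iff.1 (hslice hF' s hs)).aestronglyMeasurable
  · filter_upwards with y hy σ hσ
    rw [uIoc_of_le (by norm_num)] at hy
    exact hC (y, σ) ⟨Ioc_subset_Icc_self hy, Ioo_subset_Icc_self hσ⟩
  · filter_upwards [hae] with y hy1 hy σ hσ
    rw [uIoc_of_le (by norm_num)] at hy
    exact hd y ⟨hy.1, lt_of_le_of_ne hy.2 hy1⟩ σ hσ

lemma continuous_rho {p : ℝ} (hp : 1 < p) : Continuous (rho p) := by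
  have : 0 < 2 / (p - 1) := div_pos two_pos (by linarith)
  exact (by fun_prop : Continuous fun y : ℝ => 1 - y ^ 2).rpow_const fun _ => Or.inr this.le

/-- `ρ' = -(4 / (p - 1)) · y ρ / (1 - y²)` on the open interval. -/
lemma hasDerivAt_rho {p y : ℝ} (hy : y ∈ Ioo (-1 : ℝ) 1) :
    HasDerivAt (rho p) (-(4 / (p - 1)) * y * (rho p y / (1 - y ^ 2))) y := by
  have hpos : 0 < 1 - y ^ 2 := by nlinarith [hy.1, hy.2]
  have h := (((hasDerivAt_id y).pow 2).const_sub 1).rpow_const (p := 2 / (p - 1))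
    (Or.inl hpos.ne')
  refine h.congr_deriv ?_
  simp only [rho, id, Pi.pow_apply]
  rw [Real.rpow_sub_one hpos.ne']
  push_cast
  ring

theorem stmt2 (p : ℝ) (hp : 1 < p) (N : ℕ) (hN : 1 ≤ N) (r₀ : ℝ) (hr₀ : 0 < r₀)
    (I : Set ℝ) (hI : I.OrdConnected) (w : ℝ → ℝ → ℝ) (hw : IsSolW p N r₀ I w) :
    ∀ s ∈ interior I,
      HasDerivAt (fun σ => Ew p w σ)
        (-(4 / (p - 1)) * (∫ y in (-1 : ℝ)..1, dS w y s ^ 2 * rho p y / (1 - y ^ 2))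
          + ((N : ℝ) - 1) * Real.exp (-s) *
            ∫ y in (-1 : ℝ)..1,
              dS w y s * dY w y s * rho p y / (r₀ + y * Real.exp (-s))) s := by
  intro s hs
  obtain ⟨hC2, hpos, heq⟩ := hw
  obtain ⟨ε, hε, hball⟩ := Metric.mem_nhds_iff.1 (mem_interior_iff_mem_nhds.1 hs)
  have hJ : Icc (s - ε / 2) (s + ε / 2) ⊆ I := by
    intro τ hτ
    apply hball
    rw [Metric.mem_ball, Real.dist_eq, abs_lt]
    constructor <;> linarith [hτ.1, hτ.2]
  have hsJ : s ∈ Ioo (s - ε / 2) (s + ε / 2) := ⟨by linarith, by linarith⟩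
  have hsI : s ∈ I := interior_subset hs
  obtain ⟨a, b, ay, c, bs, ha, hb, hay, hc, hbs, hder⟩ :=
    exists_partials (hsJ.1.trans hsJ.2) (hC2.mono (prod_mono_right hJ))
  have hWc := (hC2.mono (prod_mono_right (s := Icc (-1 : ℝ) 1) hJ)).continuousOn
  generalize s - ε / 2 = s₁ at *
  generalize s + ε / 2 = s₂ at *
  have hdY : ∀ y ∈ Ioo (-1 : ℝ) 1, ∀ σ ∈ Ioo s₁ s₂, dY w y σ = a (y, σ) :=
    fun y hy σ hσ => (hder y hy σ hσ).1.deriv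
  have hdS : ∀ y ∈ Ioo (-1 : ℝ) 1, ∀ σ ∈ Ioo s₁ s₂, dS w y σ = b (y, σ) :=
    fun y hy σ hσ => (hder y hy σ hσ).2.1.deriv
  have hrho := continuous_rho hp
  have hp1 : p - 1 ≠ 0 := by linarith
  have hpp : p + 1 ≠ 0 := by linarith
  have hnh : Ioo s₁ s₂ ∈ nhds s := Ioo_mem_nhds hsJ.1 hsJ.2
  -- `F` is the energy density and `F'` its time derivative, both continuous up to `y = ±1`.
  set F : ℝ × ℝ → ℝ := fun q =>
    ((1 / 2) * b q ^ 2 + (1 / 2) * a q ^ 2 * (1 - q.1 ^ 2)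
      + (p + 1) / (p - 1) ^ 2 * w q.1 q.2 ^ 2
      - (1 / (p + 1)) * |w q.1 q.2| ^ (p + 1)) * rho p q.1 with hF
  set F' : ℝ × ℝ → ℝ := fun q =>
    (b q * bs q + a q * c q * (1 - q.1 ^ 2)
      + 2 * (p + 1) / (p - 1) ^ 2 * w q.1 q.2 * b q
      - |w q.1 q.2| ^ (p - 1) * w q.1 q.2 * b q) * rho p q.1 with hF'
  have hFc : ContinuousOn F (Icc (-1 : ℝ) 1 ×ˢ Icc s₁ s₂) := by
    have h1 := hWc.abs.rpow_const (p := p + 1) fun _ _ => Or.inr (by linarith)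
    fun_prop
  have hF'c : ContinuousOn F' (Icc (-1 : ℝ) 1 ×ˢ Icc s₁ s₂) := by
    have h1 := hWc.abs.rpow_const (p := p - 1) fun _ _ => Or.inr (by linarith)
    fun_prop
  have hFd : ∀ y ∈ Ioo (-1 : ℝ) 1, ∀ σ ∈ Ioo s₁ s₂,
      HasDerivAt (fun τ => F (y, τ)) (F' (y, σ)) σ := by
    intro y hy σ hσ
    obtain ⟨-, hw', -, ha', -, hb'⟩ := hder y hy σ hσ
    have habs := (hasDerivAt_abs_rpow (w y σ) (p := p + 1) (by linarith)).comp σ hw'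
    have h := (((((hb'.pow 2).const_mul (1 / 2)).add
      (((ha'.pow 2).const_mul (1 / 2)).mul_const (1 - y ^ 2))).add
      ((hw'.pow 2).const_mul ((p + 1) / (p - 1) ^ 2))).sub
      (habs.const_mul (1 / (p + 1)))).mul_const (rho p y)
    refine h.congr_deriv ?_
    simp only [hF']
    rw [show p + 1 - 2 = p - 1 by ring]
    push_cast
    field_simp
  have hE : (fun σ => Ew p w σ) =ᶠ[nhds s] fun σ => ∫ y in (-1 : ℝ)..1, F (y, σ) := by
    filter_upwards [hnh] with σ hσ
    refine intervalIntegral.integral_congr_Ioo_of_le (by norm_num) fun y hy => ?_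
    simp only [hF, hdY y hy σ hσ, hdS y hy σ hσ]
  refine HasDerivAt.congr_of_eventuallyEq ?_ hE
  refine (hasDerivAt_integral_of_continuousOn hsJ hFc hF'c hFd).congr_deriv ?_
  -- The integrands of the two integrals in the claim, with the partial derivatives replaced by their
  -- continuous extensions to the closed interval.
  set R₁ : ℝ → ℝ := fun y => b (y, s) ^ 2 * rho p y / (1 - y ^ 2) with hR₁
  set R₂ : ℝ → ℝ := fun y => b (y, s) * a (y, s) * rho p y / (r₀ + y * Real.exp (-s)) with hR₂
  have hI₁ : ∫ y in (-1 : ℝ)..1, dS w y s ^ 2 * rho p y / (1 - y ^ 2) =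
      ∫ y in (-1 : ℝ)..1, R₁ y := by
    refine intervalIntegral.integral_congr_Ioo_of_le (by norm_num) fun y hy => ?_
    simp only [hR₁, hdS y hy s hsJ]
  have hI₂ : ∫ y in (-1 : ℝ)..1, dS w y s * dY w y s * rho p y / (r₀ + y * Real.exp (-s)) =
      ∫ y in (-1 : ℝ)..1, R₂ y := by
    refine intervalIntegral.integral_congr_Ioo_of_le (by norm_num) fun y hy => ?_
    simp only [hR₂, hdS y hy s hsJ, hdY y hy s hsJ]
  rw [hI₁, hI₂]
  have hslice : MapsTo (fun y : ℝ => (y, s)) (Icc (-1) 1) (Icc (-1 : ℝ) 1 ×ˢ Icc s₁ s₂) :=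
    fun y hy => ⟨hy, Ioo_subset_Icc_self hsJ⟩
  have hcs : ContinuousOn (fun y : ℝ => (y, s)) (Icc (-1) 1) := by fun_prop
  have has : ContinuousOn (fun y => a (y, s)) (Icc (-1) 1) := ha.comp hcs hslice
  have hbs' : ContinuousOn (fun y => b (y, s)) (Icc (-1) 1) := hb.comp hcs hslice
  have hF's : IntervalIntegrable (fun y => F' (y, s)) volume (-1) 1 :=
    (hF'c.comp hcs hslice).intervalIntegrable_of_Icc (by norm_num)
  have hR₁i : IntervalIntegrable R₁ volume (-1) 1 := by
    have hr : -1 < 2 / (p - 1) - 1 := by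
      have : 0 < 2 / (p - 1) := div_pos two_pos (by linarith)
      linarith
    have hcont : ContinuousOn (fun y => b (y, s) ^ 2) (uIcc (-1) 1) := by
      rw [uIcc_of_le (by norm_num)]
      exact hbs'.pow 2
    refine ((intervalIntegrable_one_sub_sq_rpow hr).mul_continuousOn hcont).congr_uIoo ?_
    intro y hy
    rw [uIoo_of_le (by norm_num)] at hy
    have h1 : 0 < 1 - y ^ 2 := by nlinarith [hy.1, hy.2]
    simp only [hR₁, rho]
    rw [Real.rpow_sub_one h1.ne']
    ring
  have hR₂i : IntervalIntegrable R₂ volume (-1) 1 := by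
    refine ContinuousOn.intervalIntegrable_of_Icc (by norm_num) ?_
    exact ((hbs'.mul has).mul hrho.continuousOn).div (by fun_prop)
      fun y hy => ne_of_gt (hpos y hy s hsI)
  -- `G` is the boundary term of the integration by parts; it vanishes at `y = ±1` since `ρ` does.
  set G : ℝ → ℝ := fun y =>
    rho p y * (1 - y ^ 2) * a (y, s) * b (y, s) - y * rho p y * b (y, s) ^ 2 with hG
  have hGc : ContinuousOn G (Icc (-1) 1) := by fun_prop
  have hGd : ∀ y ∈ Ioo (-1 : ℝ) 1, HasDerivAt G (F' (y, s) -
      (-(4 / (p - 1)) * R₁ y + ((N : ℝ) - 1) * Real.exp (-s) * R₂ y)) y := by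
    intro y hy
    have h1 : 0 < 1 - y ^ 2 := by nlinarith [hy.1, hy.2]
    have hρ0 : 0 < rho p y := Real.rpow_pos_of_pos h1 _
    have hden := hpos y (Ioo_subset_Icc_self hy) s hsI
    obtain ⟨-, -, ha', -, hb', hbt⟩ := hder y hy s hsJ
    -- `ρ (1 - y²) ∂ᵧw` is differentiated by the product rule, so that the divergence term of the
    -- equation becomes an explicit expression and the identity for `G'` is algebraic.
    have hflux := ((hasDerivAt_rho (p := p) hy).mul
      (((hasDerivAt_id y).pow 2).const_sub 1)).mul ha'
    have hnhy : Ioo (-1 : ℝ) 1 ∈ nhds y := Ioo_mem_nhds hy.1 hy.2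
    have e1 : deriv (fun σ => dS w y σ) s = bs (y, s) := by
      refine (hbt.congr_of_eventuallyEq ?_).deriv
      filter_upwards [hnh] with σ hσ using hdS y hy σ hσ
    have e2 : deriv (fun z => dS w z s) y = c (y, s) := by
      refine (hb'.congr_of_eventuallyEq ?_).deriv
      filter_upwards [hnhy] with z hz using hdS z hz s hsJ
    have e3 := (hflux.congr_of_eventuallyEq
      (f₁ := fun z => rho p z * (1 - z ^ 2) * dY w z s) (by
        filter_upwards [hnhy] with z hz
        simp [hdY z hz s hsJ])).deriv
    have hpde := heq y hy s hsI
    rw [e1, e2, e3, hdS y hy s hsJ, hdY y hy s hsJ] at hpde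
    have h := (hflux.mul hb').sub
      (((hasDerivAt_id y).mul (hasDerivAt_rho (p := p) hy)).mul (hb'.pow 2))
    refine h.congr_deriv ?_
    simp only [hF', hR₁, hR₂]
    rw [hpde]
    generalize |w y s| ^ (p - 1) = A
    simp
    field_simp
    ring
  have hint := intervalIntegral.integral_eq_sub_of_hasDerivAt_of_le (by norm_num) hGc hGd
    (hF's.sub ((hR₁i.const_mul _).add (hR₂i.const_mul _)))
  have hρ : rho p 1 = 0 ∧ rho p (-1) = 0 := by
    have : 2 / (p - 1) ≠ 0 := div_ne_zero two_ne_zero hp1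
    simp [rho, Real.zero_rpow this]
  rw [intervalIntegral.integral_sub hF's ((hR₁i.const_mul _).add (hR₂i.const_mul _)),
    intervalIntegral.integral_add (hR₁i.const_mul _) (hR₂i.const_mul _),
    intervalIntegral.integral_const_mul, intervalIntegral.integral_const_mul] at hint
  simp only [hG, hρ.1, hρ.2] at hint
  linarith

end
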